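/- Let f ∈ ℂ[x₁,…,x_{n+1}] be a strongly tame polynomial for the weights α and weighted degree d. Let J ⊆ ℂ[x] be the ℂ-linear span of all polynomials (∂f/∂xᵢ)·(∂h/∂xⱼ) − (∂f/∂xⱼ)·(∂h/∂xᵢ) with h ∈ ℂ[x], 1 ≤ i < j ≤ n+1, and let J_f := ⟨∂f/∂x₁,…,∂f/∂x_{n+1}⟩ be the Jacobian ideal. Then J ⊆ J_f, both J and J_f are stable under multiplication by f, and the classes of the polynomials e_β := x^β · Σ_{i=1}^{n+1} (αᵢ/d)·xᵢ·∂f/∂xᵢ, β ∈ I, form a basis of the quotient J_f/J as a free module over ℂ[t], with t acting as multiplication by f. (This is the statement that the forms η_β = x^β·Σᵢ(−1)^{i−1}(αᵢ/d)xᵢ d̂xᵢ, β ∈ I, freely generate the Brieskorn module H' = (df ∧ Ω^n)/(df ∧ dΩ^{n−1}) over ℂ[t]: identifying an (n+1)-form with its coefficient, df ∧ Ω^n corresponds to J_f and df ∧ η_β to e_β.) -/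

import Mathlib

open MvPolynomial

namespace BH

section Kos
variable {R : Type*} [CommRing R] {N : ℕ}

def KQ (G : Fin N → R) (I : Ideal R) (i : ℕ) : Prop :=
  ∀ x : (Fin N → R) [⋀^Fin (i + 1)]→ₗ[R] R, (∀ v, x.curryLeft G v ∈ I) →
    ∃ z : (Fin N → R) [⋀^Fin (i + 2)]→ₗ[R] R, ∀ v, x v - z.curryLeft G v ∈ I

lemma alt_zero (i : ℕ) (h : N < i) (x : (Fin N → R) [⋀^Fin i]→ₗ[R] R) : x = 0 := by
  apply Module.Basis.ext_alternating (Pi.basisFun R (Fin N))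
  intro v hv
  have := Fintype.card_le_of_injective v hv
  simp at this
  omega

lemma KQ_base (G : Fin N → R) (I : Ideal R) (i : ℕ) (h : N ≤ i) : KQ G I i := by
  intro x _
  refine ⟨0, fun v => ?_⟩
  rw [alt_zero (i + 1) (by omega) x]
  simp

/-- wedge with a one-form -/
noncomputable def wdg {i : ℕ} (c : (Fin N → R) →ₗ[R] R) (x : (Fin N → R) [⋀^Fin i]→ₗ[R] R) :
    (Fin N → R) [⋀^Fin (i + 1)]→ₗ[R] R :=
  AlternatingMap.alternatizeUncurryFin (c.smulRight x)

lemma wdg_contract {i : ℕ} (c : (Fin N → R) →ₗ[R] R) (x : (Fin N → R) [⋀^Fin (i + 1)]→ₗ[R] R)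
    (G : Fin N → R) (v) :
    (wdg c x).curryLeft G v = c G * x v - wdg c (x.curryLeft G) v := by
  simp only [wdg, AlternatingMap.curryLeft_apply_apply,
    AlternatingMap.alternatizeUncurryFin_apply]
  rw [Fin.sum_univ_succ]
  simp only [Fin.val_zero, pow_zero, one_smul, Fin.removeNth_zero, LinearMap.smulRight_apply]
  rw [sub_eq_add_neg, ← Finset.sum_neg_distrib]
  congr 1
  apply Finset.sum_congr rfl
  intro k _
  have : Fin.removeNth k.succ (Matrix.vecCons G v) = Matrix.vecCons G (k.removeNth v) := by
    ext a
    refine Fin.cases ?_ (fun a => ?_) a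
    · simp [Fin.removeNth, Matrix.vecCons]
    · simp [Fin.removeNth, Matrix.vecCons]
  simp [this, pow_succ, AlternatingMap.curryLeft_apply_apply]

lemma wdg_mem {i : ℕ} (c : (Fin N → R) →ₗ[R] R) (x : (Fin N → R) [⋀^Fin i]→ₗ[R] R)
    (I : Ideal R) (h : ∀ v, x v ∈ I) (v) : wdg c x v ∈ I := by
  simp only [wdg, AlternatingMap.alternatizeUncurryFin_apply]
  refine Ideal.sum_mem _ fun k _ => ?_
  have : (c.smulRight x (v k)) (k.removeNth v) ∈ I := by
    simpa using I.mul_mem_left _ (h _)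
  rcases neg_one_pow_eq_or ℤ (k : ℕ) with h | h <;> rw [h]
  · simpa using this
  · simpa using this

lemma alt_lift {i : ℕ} (I : Ideal R) (a : R) (y : (Fin N → R) [⋀^Fin i]→ₗ[R] R)
    (h : ∀ v, y v ∈ I ⊔ Ideal.span {a}) :
    ∃ w u : (Fin N → R) [⋀^Fin i]→ₗ[R] R, (∀ v, u v ∈ I) ∧ ∀ v, y v = a * w v + u v := by
  let y' : (Fin N → R) [⋀^Fin i]→ₗ[R] (I ⊔ Ideal.span {a} : Ideal R) :=
    { toFun := fun v => ⟨y v, h v⟩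
      map_update_add' := by intros; ext; simp
      map_update_smul' := by intros; ext; simp
      map_eq_zero_of_eq' := by
        intro v p q h1 h2; ext; simp [y.map_eq_zero_of_eq v h1 h2] }
  let pr : (I × R) →ₗ[R] (I ⊔ Ideal.span {a} : Ideal R) :=
    LinearMap.codRestrict _ ((Submodule.subtype I).coprod (LinearMap.mulLeft R a)) (by
      rintro ⟨p, q⟩
      simp only [LinearMap.coprod_apply, Submodule.subtype_apply, LinearMap.mulLeft_apply]
      exact Submodule.add_mem_sup p.2 (Ideal.mul_mem_right _ _ (Ideal.mem_span_singleton_self a)))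
  have hpr : Function.Surjective pr := by
    rintro ⟨p, hp⟩
    obtain ⟨s, hs, t, ht, rfl⟩ := Submodule.mem_sup.1 hp
    obtain ⟨r, rfl⟩ := Ideal.mem_span_singleton'.1 ht
    refine ⟨(⟨s, hs⟩, r), ?_⟩
    ext
    simp [pr, mul_comm]
  obtain ⟨L, hL⟩ := Module.projective_lifting_property pr
    (exteriorPower.alternatingMapLinearEquiv y') hpr
  have key : ∀ v, pr (L (exteriorPower.ιMulti R i v)) = y' v := by
    intro v
    have := LinearMap.congr_fun hL (exteriorPower.ιMulti R i v)
    simpa using this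
  refine ⟨((LinearMap.snd R I R).comp L).compAlternatingMap (exteriorPower.ιMulti R i),
    ((Submodule.subtype I).comp ((LinearMap.fst R I R).comp L)).compAlternatingMap
      (exteriorPower.ιMulti R i), ?_, ?_⟩
  · intro v; simp
  · intro v
    have := congrArg Subtype.val (key v)
    simp [pr, y'] at this
    simp [← this, add_comm]

lemma KQ_step (G : Fin N → R) (I : Ideal R) (i : ℕ) (c : (Fin N → R) →ₗ[R] R)
    (hreg : ∀ q, c G * q ∈ I → q ∈ I) (h : KQ G (I ⊔ Ideal.span {c G}) (i + 1)) : KQ G I i := by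
  intro x hx
  obtain ⟨z, hz⟩ := h (wdg c x) (by
    intro v
    rw [wdg_contract]
    refine Ideal.sub_mem _ ?_ ?_
    · exact Ideal.mem_sup_right (Ideal.mul_mem_right _ _ (Ideal.mem_span_singleton_self _))
    · exact Ideal.mem_sup_left (wdg_mem _ _ _ hx v))
  obtain ⟨w, u, hu, hw⟩ := alt_lift I (c G) (wdg c x - z.curryLeft G) (by simpa using hz)
  refine ⟨w, fun v => hreg _ ?_⟩
  have h1 := wdg_contract c x G v
  have h2 : (wdg c x).curryLeft G v - (z.curryLeft G).curryLeft G v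
      = c G * w.curryLeft G v + u.curryLeft G v := by
    exact hw (Matrix.vecCons G v)
  rw [AlternatingMap.curryLeft_same] at h2
  have : c G * (x v - w.curryLeft G v) = u.curryLeft G v + wdg c (x.curryLeft G) v := by
    simp only [AlternatingMap.zero_apply] at h2
    linear_combination h2 - h1
  rw [this]
  exact I.add_mem (hu _) (wdg_mem _ _ _ hx v)

lemma KQ_all (G : Fin N → R) (c : ℕ → ((Fin N → R) →ₗ[R] R))
    (hreg : ∀ j < N, ∀ q, c j G * q ∈ Ideal.span ((fun k => c k G) '' {k | k < j}) →
      q ∈ Ideal.span ((fun k => c k G) '' {k | k < j})) (k : ℕ) : ∀ r, r + k = N →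
    KQ G (Ideal.span ((fun k => c k G) '' {k | k < r})) r := by
  induction k with
  | zero => intro r hr; exact KQ_base _ _ _ (by omega)
  | succ k ih =>
    intro r hr
    refine KQ_step G _ r (c r) (hreg r (by omega)) ?_
    have := ih (r + 1) (by omega)
    convert this using 1
    rw [← Ideal.span_union]
    congr 1
    have : {k | k < r + 1} = {k | k < r} ∪ {r} := by ext; simp; omega
    rw [this, Set.image_union]; simp

end Kos

lemma nzd {N : ℕ} (p : Fin N → Polynomial ℂ) (j : Fin N) (hp : (p j).Monic) (s : Set (Fin N))
    (hj : j ∉ s) (q : MvPolynomial (Fin N) ℂ)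
    (h : Polynomial.aeval (X j) (p j) * q ∈
      Ideal.span ((fun i => Polynomial.aeval (X i : MvPolynomial (Fin N) ℂ) (p i)) '' s)) :
    q ∈ Ideal.span ((fun i => Polynomial.aeval (X i : MvPolynomial (Fin N) ℂ) (p i)) '' s) := by
  classical
  set I := Ideal.span ((fun i => Polynomial.aeval (X i : MvPolynomial (Fin N) ℂ) (p i)) '' s)
  let φ : MvPolynomial (Fin N) ℂ →ₐ[ℂ] Polynomial (MvPolynomial (Fin N) ℂ) :=
    aeval (fun i => if i = j then Polynomial.X else Polynomial.C (X i))
  let ψ : Polynomial (MvPolynomial (Fin N) ℂ) →+* MvPolynomial (Fin N) ℂ :=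
    Polynomial.evalRingHom (X j)
  have hψφ : ∀ q, ψ (φ q) = q := by
    intro q
    have : (ψ.comp (φ : _ →+* _)) = RingHom.id _ := by
      apply MvPolynomial.ringHom_ext
      · intro r; simp [ψ, φ, IsScalarTower.algebraMap_apply ℂ (MvPolynomial (Fin N) ℂ) (Polynomial (MvPolynomial (Fin N) ℂ)), MvPolynomial.algebraMap_eq]
      · intro i
        by_cases hi : i = j <;> simp [ψ, φ, hi]
    exact RingHom.congr_fun this q
  have hφj : φ (Polynomial.aeval (X j) (p j)) = (p j).map (algebraMap ℂ _) := by
    rw [← Polynomial.aeval_algHom_apply]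
    simp [φ, Polynomial.aeval_X_left_eq_map]
  have hφI : ∀ q ∈ I, φ q ∈ I.map Polynomial.C := by
    intro q hq
    have : I ≤ (I.map Polynomial.C).comap (φ : MvPolynomial (Fin N) ℂ →+* _) := by
      refine Ideal.span_le.2 ?_
      rintro _ ⟨i, hi, rfl⟩
      have hij : i ≠ j := fun h => hj (h ▸ hi)
      have : φ (Polynomial.aeval (X i) (p i)) =
          Polynomial.C (Polynomial.aeval (X i : MvPolynomial (Fin N) ℂ) (p i)) := by
        rw [← Polynomial.aeval_algHom_apply]
        have := Polynomial.aeval_algHom_apply (Polynomial.CAlgHom (R := ℂ) (A := MvPolynomial (Fin N) ℂ)) (X i) (p i)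
        simp [φ, hij] at this ⊢
        exact this
      simp only [SetLike.mem_coe, Ideal.mem_comap]
      show φ (Polynomial.aeval (X i) (p i)) ∈ _
      rw [this]
      exact Ideal.mem_map_of_mem _ (Ideal.subset_span ⟨i, hi, rfl⟩)
    exact this hq
  have h1 := hφI _ h
  rw [map_mul, hφj] at h1
  have h2 : φ q ∈ I.map Polynomial.C := by
    have hk : ∀ r : Polynomial (MvPolynomial (Fin N) ℂ), r ∈ I.map Polynomial.C ↔
        r.map (Ideal.Quotient.mk I) = 0 := by
      intro r
      rw [Ideal.mem_map_C_iff, Polynomial.ext_iff]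
      simp [Ideal.Quotient.eq_zero_iff_mem]
    rw [hk] at h1 ⊢
    rw [Polynomial.map_mul, Polynomial.map_map] at h1
    exact ((hp.map _).mul_right_eq_zero_iff).1 h1
  have h3 : I.map Polynomial.C ≤ I.comap ψ := by
    rw [Ideal.map_le_iff_le_comap]
    intro r hr
    simpa [ψ] using hr
  have := h3 h2
  rwa [Ideal.mem_comap, hψφ] at this

lemma koszul_H1 {N : ℕ} (F : Fin N → MvPolynomial (Fin N) ℂ)
    (hfin : Module.Finite ℂ (MvPolynomial (Fin N) ℂ ⧸ Ideal.span (Set.range F)))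
    (ξ : Fin N → MvPolynomial (Fin N) ℂ) (h : ∑ i, F i * ξ i = 0) :
    ∃ θ : Fin N → Fin N → MvPolynomial (Fin N) ℂ, (∀ i j, θ i j = - θ j i) ∧
      ∀ i, ξ i = ∑ j, F j * θ i j := by
  classical
  have hp : ∀ j : Fin N, ∃ p : Polynomial ℂ, p.Monic ∧
      ∃ c : Fin N → MvPolynomial (Fin N) ℂ, ∑ i, c i * F i = Polynomial.aeval (X j) p := by
    intro j
    obtain ⟨p, hp, hp0⟩ := (Algebra.IsIntegral.of_finite ℂ
      (MvPolynomial (Fin N) ℂ ⧸ Ideal.span (Set.range F))).isIntegral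
      (Ideal.Quotient.mkₐ ℂ (Ideal.span (Set.range F)) (X j))
    refine ⟨p, hp, ?_⟩
    rw [← Polynomial.aeval_def, Polynomial.aeval_algHom_apply, Ideal.Quotient.mkₐ_eq_mk,
      Ideal.Quotient.eq_zero_iff_mem] at hp0
    exact Ideal.mem_span_range_iff_exists_fun.1 hp0
  choose p hpm c hc using hp
  let c' : ℕ → ((Fin N → MvPolynomial (Fin N) ℂ) →ₗ[MvPolynomial (Fin N) ℂ] MvPolynomial (Fin N) ℂ) :=
    fun k => if hk : k < N then Fintype.linearCombination (MvPolynomial (Fin N) ℂ) (c ⟨k, hk⟩) else 0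
  have hc' : ∀ j : Fin N, c' j F = Polynomial.aeval (X j) (p j) := by
    intro j
    simp [c', Fintype.linearCombination_apply, ← hc, mul_comm]
  have hQ := KQ_all F c' (by
    intro j hj q
    have : ((fun k => c' k F) '' {k | k < j}) =
      ((fun i => Polynomial.aeval (X i : MvPolynomial (Fin N) ℂ) (p i)) '' {i : Fin N | i.1 < j}) := by
      ext y
      constructor
      · rintro ⟨k, hk, rfl⟩
        simp only [Set.mem_ofPred_eq] at hk
        exact ⟨⟨k, by omega⟩, hk, (hc' ⟨k, by omega⟩).symm⟩
      · rintro ⟨k, hk, rfl⟩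
        exact ⟨k, hk, hc' k⟩
    rw [this, hc' ⟨j, hj⟩]
    exact nzd p ⟨j, hj⟩ (hpm _) _ (by simp) q) N 0 (by simp)
  have hI : Ideal.span ((fun k => c' k F) '' {k | k < 0}) = ⊥ := by simp
  rw [hI] at hQ
  let x : (Fin N → MvPolynomial (Fin N) ℂ) [⋀^Fin (0 + 1)]→ₗ[MvPolynomial (Fin N) ℂ] MvPolynomial (Fin N) ℂ :=
    (Fintype.linearCombination (MvPolynomial (Fin N) ℂ) ξ).compAlternatingMap
      (AlternatingMap.ofSubsingleton _ _ _ (0 : Fin 1) LinearMap.id)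
  have hx : ∀ v, x v = ∑ i, v 0 i * ξ i := by
    intro v; simp [x, Fintype.linearCombination_apply]
  obtain ⟨z, hz⟩ := hQ x (by
    intro v
    rw [AlternatingMap.curryLeft_apply_apply, hx]
    simpa using h)
  refine ⟨fun i j => z ![Pi.single j 1, Pi.single i 1], ?_, ?_⟩
  · intro i j
    have := z.map_swap ![Pi.single i 1, Pi.single j 1] (i := 0) (j := 1) (by simp)
    rw [← this]
    show z _ = z _
    congr 1
    funext k
    fin_cases k <;> simp
  · intro i
    have h1 := hz ![Pi.single i 1]
    rw [Ideal.mem_bot, sub_eq_zero, hx] at h1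
    have h2 : ξ i = ∑ k, (![Pi.single i 1] : Fin 1 → Fin N → MvPolynomial (Fin N) ℂ) 0 k * ξ k := by
      simp [Pi.single_apply]
    rw [h2, h1]
    have h3 : z.curryLeft F ![Pi.single i 1] = z.curryLeft (∑ j, F j • Pi.single j 1) ![Pi.single i 1] := by
      congr 1
      congr 1
      ext1 k
      simp [Finset.sum_apply, Pi.single_apply]
    let L : (Fin N → MvPolynomial (Fin N) ℂ) →ₗ[MvPolynomial (Fin N) ℂ] MvPolynomial (Fin N) ℂ :=
      { toFun := fun G => z.curryLeft G ![Pi.single i 1]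
        map_add' := by intro a b; rw [map_add]; rfl
        map_smul' := by intro a b; rw [map_smul]; rfl }
    rw [h3]
    change L (∑ j, F j • Pi.single j 1) = _
    rw [map_sum]
    refine Finset.sum_congr rfl fun j _ => ?_
    rw [map_smul]
    rfl

section Diag
variable {σ : Type*}

/-- diagonal operator on monomials -/
noncomputable def Dg (φ : (σ →₀ ℕ) → ℂ) : MvPolynomial σ ℂ →ₗ[ℂ] MvPolynomial σ ℂ :=
  (basisMonomials σ ℂ).constr ℂ (fun β => monomial β (φ β))

lemma Dg_monomial (φ : (σ →₀ ℕ) → ℂ) (β : σ →₀ ℕ) (a : ℂ) :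
    Dg φ (monomial β a) = monomial β (φ β * a) := by
  have h : monomial β a = a • basisMonomials σ ℂ β := by simp [smul_monomial]
  rw [h, map_smul, Dg, Module.Basis.constr_basis, smul_monomial, smul_eq_mul, mul_comm]

lemma lin_ext {V : Type*} [AddCommMonoid V] [Module ℂ V] {A B : MvPolynomial σ ℂ →ₗ[ℂ] V}
    (h : ∀ β a, A (monomial β a) = B (monomial β a)) (p) : A p = B p := by
  rw [p.as_sum, map_sum, map_sum]
  exact Finset.sum_congr rfl fun β _ => h β _

lemma coeff_Dg (φ : (σ →₀ ℕ) → ℂ) (β : σ →₀ ℕ) (p) :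
    coeff β (Dg φ p) = φ β * coeff β p := by
  classical
  refine lin_ext (A := (lcoeff ℂ β).comp (Dg φ)) (B := (φ β) • lcoeff ℂ β) ?_ p
  intro γ a
  simp only [LinearMap.comp_apply, Dg_monomial, lcoeff_apply, coeff_monomial, LinearMap.smul_apply,
    smul_eq_mul]
  split_ifs with h <;> simp [h]

end Diag

section Forms
variable {N : ℕ} (α : Fin N → ℕ)

local notation "S" => MvPolynomial (Fin N) ℂ

/-- weight -/
def wt (β : Fin N →₀ ℕ) : ℕ := ∑ i, α i * β i

lemma wt_add (β γ : Fin N →₀ ℕ) : wt α (β + γ) = wt α β + wt α γ := by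
  simp [wt, mul_add, Finset.sum_add_distrib]

lemma wt_single (i : Fin N) (k : ℕ) : wt α (Finsupp.single i k) = α i * k := by
  classical
  simp [wt, Finsupp.single_apply]

noncomputable def dv (ξ : Fin N → MvPolynomial (Fin N) ℂ) : MvPolynomial (Fin N) ℂ :=
  ∑ i, pderiv i (ξ i)

noncomputable def dt (f : MvPolynomial (Fin N) ℂ) (ξ : Fin N → MvPolynomial (Fin N) ℂ) :
    MvPolynomial (Fin N) ℂ := ∑ i, pderiv i f * ξ i

noncomputable def JJ (f : MvPolynomial (Fin N) ℂ) : Submodule ℂ (MvPolynomial (Fin N) ℂ) :=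
  Submodule.span ℂ
      {P : MvPolynomial (Fin N) ℂ |
        ∃ (h : MvPolynomial (Fin N) ℂ) (i j : Fin N), i < j ∧
          P = pderiv i f * pderiv j h - pderiv j f * pderiv i h}

def Wt : ℕ := ∑ i, α i

/-- Euler identity -/
lemma euler_dv (p : S) :
    ∑ j, pderiv j (C (α j : ℂ) * X j * p) = Dg (fun β => (Wt α : ℂ) + wt α β) p := by
  classical
  let A : S →ₗ[ℂ] S := ∑ j, (pderiv j).toLinearMap.comp (LinearMap.mulLeft ℂ (C (α j : ℂ) * X j))
  have hA : ∀ p, A p = ∑ j, pderiv j (C (α j : ℂ) * X j * p) := by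
    intro p; simp [A]; exact Finset.sum_congr rfl fun j _ => by ring
  rw [← hA]
  refine lin_ext ?_ p
  intro β a
  rw [hA, Dg_monomial]
  have : ∀ j, pderiv j (C (α j : ℂ) * X j * monomial β a)
      = monomial β ((α j : ℂ) * (1 + β j) * a) := by
    intro j
    have : C (α j : ℂ) * X j * monomial β a
        = monomial (Finsupp.single j 1 + β) ((α j : ℂ) * a) := by
      rw [mul_assoc, X, monomial_mul, C_mul_monomial, one_mul]
    rw [this, pderiv_monomial]
    simp
    congr 1; ring
  simp_rw [this]
  rw [← map_sum]
  congr 1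
  simp only [Wt, wt, Nat.cast_sum, Nat.cast_mul, ← Finset.sum_add_distrib, Finset.sum_mul]
  exact Finset.sum_congr rfl fun j _ => by ring

/-- inverse -/
noncomputable def Bop : S →ₗ[ℂ] S := Dg (fun β => ((Wt α : ℂ) + wt α β)⁻¹)

noncomputable def Kop (i : Fin N) : S →ₗ[ℂ] S := Dg (fun β => ((Wt α : ℂ) + wt α β - α i)⁻¹)

lemma Dg_comp (φ ψ : (Fin N →₀ ℕ) → ℂ) (p : S) : Dg φ (Dg ψ p) = Dg (fun β => φ β * ψ β) p := by
  ext β; simp [coeff_Dg, mul_assoc]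

lemma Dg_one (p : S) : Dg (fun _ => 1) p = p := by ext β; simp [coeff_Dg]

lemma pderiv_Kop (i : Fin N) (p : S) : pderiv i (Kop α i p) = Bop α (pderiv i p) := by
  refine lin_ext (A := (pderiv i).toLinearMap.comp (Kop α i))
    (B := (Bop α).comp (pderiv i).toLinearMap) ?_ p
  intro β a
  simp only [LinearMap.comp_apply, Kop, Bop, Dg_monomial, Derivation.coeFn_coe, pderiv_monomial]
  by_cases h : β i = 0
  · simp [h]
  · have hβ : β = (β - Finsupp.single i 1) + Finsupp.single i 1 := by
      rw [tsub_add_cancel_of_le]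
      simpa [Finsupp.single_le_iff] using Nat.one_le_iff_ne_zero.2 h
    have : wt α β = wt α (β - Finsupp.single i 1) + α i := by
      conv_lhs => rw [hβ]
      rw [wt_add, wt_single, mul_one]
    congr 1
    rw [this]
    push_cast
    ring_nf

variable (hα : ∀ i, 0 < α i) (hN : 2 ≤ N)

lemma lt_Wt (hα : ∀ i, 0 < α i) (hN : 2 ≤ N) (i : Fin N) : α i < Wt α := by
  classical
  have : ∃ j, j ≠ i := by
    have : Nontrivial (Fin N) := Fin.nontrivial_iff_two_le.2 hN
    exact exists_ne i
  obtain ⟨j, hj⟩ := this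
  have h1 : ∑ k ∈ {i, j}, α k ≤ Wt α := Finset.sum_le_sum_of_subset (Finset.subset_univ _)
  rw [Finset.sum_pair hj.symm] at h1
  have := hα j
  omega

lemma dv_B (hα : ∀ i, 0 < α i) (hN : 2 ≤ N) (p : S) :
    dv (fun i => C (α i : ℂ) * X i * Bop α p) = p := by
  rw [dv, euler_dv, Bop, Dg_comp]
  convert Dg_one p using 3
  funext β
  have := lt_Wt α hα hN ⟨0, by omega⟩
  apply mul_inv_cancel₀
  norm_cast
  omega

lemma poincare (hα : ∀ i, 0 < α i) (hN : 2 ≤ N) (ξ : Fin N → S) (h : dv ξ = 0) :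
    ∃ ζ : Fin N → Fin N → S, (∀ i j, ζ i j = - ζ j i) ∧ ∀ i, ξ i = ∑ j, pderiv j (ζ i j) := by
  classical
  refine ⟨fun i j => C (α j : ℂ) * X j * Kop α i (ξ i) - C (α i : ℂ) * X i * Kop α j (ξ j),
    fun i j => by ring, fun i => ?_⟩
  simp only [map_sub, Finset.sum_sub_distrib]
  rw [euler_dv]
  have h2 : ∑ j, pderiv j (C (α i : ℂ) * X i * Kop α j (ξ j))
      = C (α i : ℂ) * Kop α i (ξ i) + C (α i : ℂ) * X i * Bop α (dv ξ) := by
    rw [dv, map_sum, Finset.mul_sum]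
    simp only [Derivation.leibniz, pderiv_Kop, pderiv_C, pderiv_X, smul_eq_mul, mul_zero, add_zero,
      Finset.sum_add_distrib]
    rw [add_comm]
    congr 1
    rw [Finset.sum_eq_single i]
    · simp; ring
    · intro j _ hj; simp [hj.symm]
    · simp
  rw [h2, h, map_zero, mul_zero, add_zero]
  ext β
  simp only [coeff_sub, coeff_Dg, coeff_C_mul, Kop]
  have := lt_Wt α hα hN i
  have h3 : (Wt α : ℂ) + wt α β - α i ≠ 0 := by
    rw [sub_ne_zero]; norm_cast; omega
  field_simp

lemma antisym_sum (a ζ : Fin N → Fin N → S) (ha : ∀ i j, a i j = a j i)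
    (hζ : ∀ i j, ζ i j = - ζ j i) : ∑ i, ∑ j, a i j * ζ i j = 0 := by
  have h : ∑ i, ∑ j, a i j * ζ i j = - ∑ i, ∑ j, a i j * ζ i j := by
    conv_lhs => rw [Finset.sum_comm]
    simp only [← Finset.sum_neg_distrib]
    refine Finset.sum_congr rfl fun i _ => Finset.sum_congr rfl fun j _ => ?_
    rw [ha, hζ]; ring
  exact self_eq_neg.1 h

lemma pderiv_symm (f : S) (i j : Fin N) : pderiv i (pderiv j f) = pderiv j (pderiv i f) := by
  classical
  have h : ⁅(pderiv i : Derivation ℂ S S), (pderiv j : Derivation ℂ S S)⁆ = 0 := by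
    apply MvPolynomial.derivation_ext
    intro k
    simp only [Derivation.commutator_apply, pderiv_X, Derivation.zero_apply]
    by_cases h1 : j = k <;> by_cases h2 : i = k <;> simp [Pi.single_apply, h1, h2]
  have := Derivation.congr_fun h f
  rw [Derivation.commutator_apply] at this
  exact sub_eq_zero.1 this

/-- the divergence of contraction -/
lemma dv_contract (f : S) (ζ : Fin N → Fin N → S) (hζ : ∀ i j, ζ i j = - ζ j i) :
    dv (fun j => ∑ i, pderiv i f * ζ i j) = dt f (fun i => ∑ j, pderiv j (ζ i j)) := by
  simp only [dv, dt, map_sum, Derivation.leibniz, smul_eq_mul, Finset.sum_add_distrib,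
    Finset.mul_sum]
  rw [Finset.sum_comm]
  have := antisym_sum (fun i j => pderiv i (pderiv j f)) ζ (fun i j => pderiv_symm f i j) hζ
  rw [Finset.sum_comm] at this
  have h2 : ∑ i, ∑ j, ζ j i * pderiv i (pderiv j f) = 0 := by
    rw [← this]
    refine Finset.sum_congr rfl fun i _ => Finset.sum_congr rfl fun j _ => ?_
    rw [pderiv_symm, mul_comm]
  rw [h2, add_zero]

lemma dt_mem_J (f : S) (ζ : Fin N → Fin N → S) (hζ : ∀ i j, ζ i j = - ζ j i) :
    dt f (fun i => ∑ j, pderiv j (ζ i j)) ∈ JJ f := by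
  have hg : ∀ (h : S) i j, pderiv i f * pderiv j h - pderiv j f * pderiv i h ∈ JJ f := by
    intro h i j
    rcases lt_trichotomy i j with hij | hij | hij
    · exact Submodule.subset_span ⟨h, i, j, hij, rfl⟩
    · subst hij; simp
    · rw [← neg_sub]
      exact Submodule.neg_mem _ (Submodule.subset_span ⟨h, j, i, hij, rfl⟩)
  have h1 : dt f (fun i => ∑ j, pderiv j (ζ i j)) = (2⁻¹ : ℂ) •
      ∑ i, ∑ j, (pderiv i f * pderiv j (ζ i j) - pderiv j f * pderiv i (ζ i j)) := by
    simp only [Finset.sum_sub_distrib]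
    have : ∑ i, ∑ j, pderiv j f * pderiv i (ζ i j) = - dt f (fun i => ∑ j, pderiv j (ζ i j)) := by
      rw [Finset.sum_comm]
      simp only [dt, Finset.mul_sum, ← Finset.sum_neg_distrib]
      refine Finset.sum_congr rfl fun i _ => Finset.sum_congr rfl fun j _ => ?_
      rw [hζ j i, map_neg]; ring
    rw [this]
    simp only [dt, Finset.mul_sum]
    rw [sub_neg_eq_add, ← two_smul ℂ, smul_smul]
    simp
  rw [h1]
  exact Submodule.smul_mem _ _ (Submodule.sum_mem _ fun i _ => Submodule.sum_mem _ fun j _ => hg _ _ _)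

lemma dt_add (f : S) (ξ υ : Fin N → S) : dt f (ξ + υ) = dt f ξ + dt f υ := by
  simp [dt, mul_add, Finset.sum_add_distrib]
lemma dt_sub (f : S) (ξ υ : Fin N → S) : dt f (ξ - υ) = dt f ξ - dt f υ := by
  simp [dt, mul_sub, Finset.sum_sub_distrib]
lemma dv_add (ξ υ : Fin N → S) : dv (ξ + υ) = dv ξ + dv υ := by
  simp [dv, Finset.sum_add_distrib]
lemma dv_sub (ξ υ : Fin N → S) : dv (ξ - υ) = dv ξ - dv υ := by
  simp [dv, Finset.sum_sub_distrib]
lemma dt_smul (f : S) (a : ℂ) (ξ : Fin N → S) : dt f (a • ξ) = a • dt f ξ := by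
  simp [dt, Finset.smul_sum]
lemma dv_smul (a : ℂ) (ξ : Fin N → S) : dv (a • ξ) = a • dv ξ := by
  simp [dv, Finset.smul_sum]

lemma J_exists (f p : S) (hp : p ∈ JJ f) : ∃ υ : Fin N → S, dv υ = 0 ∧ dt f υ = p := by
  classical
  induction hp using Submodule.span_induction with
  | mem p hp =>
    obtain ⟨h, i, j, hij, rfl⟩ := hp
    refine ⟨Pi.single i (pderiv j h) - Pi.single j (pderiv i h), ?_, ?_⟩
    · have hs : ∀ (i : Fin N) (q : S), dv (Pi.single i q) = pderiv i q := by
        intro i q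
        rw [dv, Finset.sum_eq_single i]
        · simp
        · intro k _ hk; simp [hk]
        · simp
      rw [dv_sub, hs, hs, pderiv_symm, sub_self]
    · have hs : ∀ (i : Fin N) (q : S), dt f (Pi.single i q) = pderiv i f * q := by
        intro i q
        rw [dt, Finset.sum_eq_single i]
        · simp
        · intro k _ hk; simp [hk]
        · simp
      rw [dt_sub, hs, hs]
  | zero => exact ⟨0, by simp [dv], by simp [dt]⟩
  | add p q _ _ hp hq =>
    obtain ⟨a, ha, rfl⟩ := hp
    obtain ⟨b, hb, rfl⟩ := hq
    exact ⟨a + b, by rw [dv_add, ha, hb, add_zero], dt_add _ _ _⟩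
  | smul c p _ hp =>
    obtain ⟨a, ha, rfl⟩ := hp
    exact ⟨c • a, by rw [dv_smul, ha, smul_zero], dt_smul _ _ _⟩

lemma dt_closed_mem (hα : ∀ i, 0 < α i) (hN : 2 ≤ N) (f : S) (ξ : Fin N → S) (h : dv ξ = 0) :
    dt f ξ ∈ JJ f := by
  obtain ⟨ζ, hζ, h1⟩ := poincare α hα hN ξ h
  have : ξ = fun i => ∑ j, pderiv j (ζ i j) := funext h1
  rw [this]
  exact dt_mem_J f ζ hζ

lemma D1 (hα : ∀ i, 0 < α i) (hN : 2 ≤ N) (f : S) (ξ : Fin N → S) (h : dv ξ ∈ JJ f) :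
    dt f ξ ∈ JJ f := by
  obtain ⟨υ, hυ, h1⟩ := J_exists f _ h
  obtain ⟨ζ, hζ, h2⟩ := poincare α hα hN υ hυ
  have h3 := dv_contract f ζ hζ
  rw [← (funext h2 : υ = fun i => ∑ j, pderiv j (ζ i j)), h1] at h3
  have h4 := dt_closed_mem α hα hN f (ξ - fun j => ∑ i, pderiv i f * ζ i j)
    (by rw [dv_sub, h3, sub_self])
  rw [dt_sub] at h4
  have h5 : dt f (fun j => ∑ i, pderiv i f * ζ i j) = 0 := by
    have := antisym_sum (fun j i => pderiv j f * pderiv i f) (fun j i => ζ i j)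
      (fun i j => mul_comm _ _) (fun i j => hζ j i)
    rw [← this]
    simp [dt, Finset.mul_sum, mul_assoc]
  rwa [h5, sub_zero] at h4

lemma D2 (f : S) (hfin : Module.Finite ℂ (S ⧸ Ideal.span (Set.range fun i => pderiv i f)))
    (ξ : Fin N → S) (h : dt f ξ ∈ JJ f) : dv ξ ∈ JJ f := by
  obtain ⟨υ, hυ, h1⟩ := J_exists f _ h
  obtain ⟨θ, hθ, h2⟩ := koszul_H1 (fun i => pderiv i f) hfin (ξ - υ) (by
    change dt f (ξ - υ) = 0
    rw [dt_sub, h1, sub_self])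
  have h3 : dv ξ = dv (ξ - υ) := by rw [dv_sub, hυ, sub_zero]
  have h4 : ξ - υ = fun j => ∑ i, pderiv i f * (fun a b => θ b a) i j := funext h2
  rw [h3, h4, dv_contract f (fun a b => θ b a) (fun i j => hθ j i)]
  exact dt_mem_J f _ (fun i j => hθ j i)

end Forms

section Deg
variable {N : ℕ} (α : Fin N → ℕ)

local notation "S" => MvPolynomial (Fin N) ℂ

/-- polynomials whose weights of monomials satisfy `P` -/
def SP (P : ℤ → Prop) : Submodule ℂ (MvPolynomial (Fin N) ℂ) where
  carrier := {p | ∀ β, coeff β p ≠ 0 → P (wt α β)}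
  add_mem' := by
    intro a b ha hb β h
    by_cases h1 : coeff β a = 0
    · exact hb β (by simpa [h1] using h)
    · exact ha β h1
  zero_mem' := by intro β h; simp at h
  smul_mem' := by
    intro c a ha β h
    exact ha β (by intro h0; simp [h0] at h)

lemma mem_SP {P : ℤ → Prop} {p : S} : p ∈ SP α P ↔ ∀ β, coeff β p ≠ 0 → P (wt α β) := Iff.rfl

lemma SP_mono {P Q : ℤ → Prop} (h : ∀ k, P k → Q k) {p : S} (hp : p ∈ SP α P) : p ∈ SP α Q :=
  fun β hβ => h _ (hp β hβ)

lemma SP_mul {P Q T : ℤ → Prop} (h : ∀ a b, P a → Q b → T (a + b)) {p q : S} (hp : p ∈ SP α P)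
    (hq : q ∈ SP α Q) : p * q ∈ SP α T := by
  classical
  intro β hβ
  rw [coeff_mul] at hβ
  obtain ⟨⟨a, b⟩, hab, h0⟩ := Finset.exists_ne_zero_of_sum_ne_zero hβ
  rw [Finset.HasAntidiagonal.mem_antidiagonal] at hab
  simp only at hab
  have h1 := h _ _ (hp a (left_ne_zero_of_mul h0)) (hq b (right_ne_zero_of_mul h0))
  rw [← hab, wt_add]
  push_cast
  exact h1

lemma monomial_SP {P : ℤ → Prop} {β : Fin N →₀ ℕ} (a : ℂ) (h : P (wt α β)) :
    monomial β a ∈ SP α P := by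
  classical
  intro γ hγ
  rw [coeff_monomial] at hγ
  split_ifs at hγ with h1
  · exact h1 ▸ h
  · simp at hγ

lemma SP_pderiv {P Q : ℤ → Prop} (i : Fin N) (h : ∀ k, P (k + α i) → Q k) {p : S}
    (hp : p ∈ SP α P) : pderiv i p ∈ SP α Q := by
  rw [p.as_sum, map_sum]
  refine Submodule.sum_mem _ fun β hβ => ?_
  rw [pderiv_monomial]
  by_cases hi : β i = 0
  · simp [hi]
  · apply monomial_SP
    apply h
    have h1 : β = (β - Finsupp.single i 1) + Finsupp.single i 1 := by
      rw [tsub_add_cancel_of_le]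
      simpa [Finsupp.single_le_iff] using Nat.one_le_iff_ne_zero.2 hi
    have h2 : wt α β = wt α (β - Finsupp.single i 1) + α i := by
      conv_lhs => rw [h1]
      rw [wt_add, wt_single, mul_one]
    have h3 := hp β (mem_support_iff.1 hβ)
    rw [h2] at h3
    exact_mod_cast h3

/-- homogeneous component -/
noncomputable def hc (m : ℤ) : S →ₗ[ℂ] S := Dg (fun β => if (wt α β : ℤ) = m then 1 else 0)

lemma coeff_hc (m : ℤ) (p : S) (β) : coeff β (hc α m p) = if (wt α β : ℤ) = m then coeff β p else 0 := by
  rw [hc, coeff_Dg]; split_ifs <;> simp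

lemma hc_SP (m : ℤ) (p : S) : hc α m p ∈ SP α (· = m) := by
  intro β h
  rw [coeff_hc] at h
  by_contra h1
  simp [h1] at h

lemma sub_hc_SP {m : ℤ} {p : S} (hp : p ∈ SP α (· ≤ m)) : p - hc α m p ∈ SP α (· ≤ m - 1) := by
  intro β h
  rw [coeff_sub, coeff_hc] at h
  split_ifs at h with h1
  · simp at h
  · have := hp β (by simpa using h)
    show _ ≤ _
    have h2 : (wt α β : ℤ) ≤ m := this
    omega

lemma hc_eq_zero {m : ℤ} {P : ℤ → Prop} (hP : ¬ P m) {p : S} (hp : p ∈ SP α P) : hc α m p = 0 := by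
  ext β
  rw [coeff_hc]
  split_ifs with h1
  · by_contra h
    exact hP (h1 ▸ hp β h)
  · simp

lemma hc_self {m : ℤ} {p : S} (hp : p ∈ SP α (· = m)) : hc α m p = p := by
  ext β
  rw [coeff_hc]
  split_ifs with h1
  · rfl
  · by_contra h
    exact h1 (hp β (Ne.symm h))

lemma hc_mul (m k : ℤ) {q : S} (hq : q ∈ SP α (· = k)) (p : S) :
    hc α m (q * p) = q * hc α (m - k) p := by
  classical
  ext β
  rw [coeff_hc, coeff_mul, coeff_mul]
  simp only [coeff_hc]
  have h1 : (if (wt α β : ℤ) = m then ∑ x ∈ Finset.HasAntidiagonal.antidiagonal β,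
      coeff x.1 q * coeff x.2 p else 0) = ∑ x ∈ Finset.HasAntidiagonal.antidiagonal β,
      if (wt α β : ℤ) = m then coeff x.1 q * coeff x.2 p else 0 := by
    split_ifs <;> simp
  rw [h1]
  refine Finset.sum_congr rfl fun x hx => ?_
  rw [Finset.HasAntidiagonal.mem_antidiagonal] at hx
  by_cases h0 : coeff x.1 q = 0
  · simp [h0]
  · have h2 : (wt α x.1 : ℤ) = k := hq _ h0
    have h3 : wt α β = wt α x.1 + wt α x.2 := by rw [← hx, wt_add]
    by_cases h4 : (wt α β : ℤ) = m
    · rw [if_pos h4, if_pos (by omega)]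
    · rw [if_neg h4, if_neg (by omega), mul_zero]

lemma SP_neg {p : S} (hp : p ∈ SP α (· < (0 : ℤ))) : p = 0 := by
  ext β
  by_contra h
  have : (wt α β : ℤ) < 0 := hp β (by simpa using h)
  omega

lemma exists_bound (p : S) : ∃ K : ℕ, p ∈ SP α (· ≤ (K : ℤ)) := by
  refine ⟨p.support.sup (wt α), fun β h => ?_⟩
  have : wt α β ≤ p.support.sup (wt α) := Finset.le_sup (f := wt α) (mem_support_iff.2 h)
  show (wt α β : ℤ) ≤ _
  exact_mod_cast this

variable (f g : MvPolynomial (Fin N) ℂ) (d : ℕ)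

lemma pd_g (hg : g = hc α d f) (i : Fin N) : pderiv i g ∈ SP α (· = (d : ℤ) - α i) :=
  SP_pderiv α i (fun k h => by have : k + α i = (d:ℤ) := h; show k = _; omega) (hg ▸ hc_SP α d f)

lemma pd_f (hf : f ∈ SP α (· ≤ (d : ℤ))) (i : Fin N) : pderiv i f ∈ SP α (· ≤ (d : ℤ) - α i) :=
  SP_pderiv α i (fun k h => by have : k + α i ≤ (d:ℤ) := h; show k ≤ _; omega) hf

lemma pd_fg (hf : f ∈ SP α (· ≤ (d : ℤ))) (hg : g = hc α d f) (i : Fin N) :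
    pderiv i f - pderiv i g ∈ SP α (· ≤ (d : ℤ) - α i - 1) := by
  rw [← map_sub]
  refine SP_pderiv α i (fun k h => ?_) (hg ▸ sub_hc_SP α hf)
  have : k + α i ≤ (d:ℤ) - 1 := h
  show k ≤ _; omega

lemma hc_dt_g (hg : g = hc α d f) (m : ℤ) (ξ : Fin N → S) :
    hc α m (dt g ξ) = dt g (fun i => hc α (m - d + α i) (ξ i)) := by
  simp only [dt, map_sum]
  refine Finset.sum_congr rfl fun i _ => ?_
  rw [hc_mul α m _ (pd_g α f g d hg i)]
  congr 2; congr 1; omega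

/-- top component of `dt f ξ` -/
lemma dt_top (hf : f ∈ SP α (· ≤ (d : ℤ))) (hg : g = hc α d f) (M : ℤ) (ξ : Fin N → S)
    (hξ : ∀ i, ξ i ∈ SP α (· ≤ M - d + α i)) :
    hc α M (dt f ξ) = dt g (fun i => hc α (M - d + α i) (ξ i)) := by
  have h1 : dt f ξ = dt g ξ + ∑ i, (pderiv i f - pderiv i g) * ξ i := by
    simp [dt, sub_mul, Finset.sum_sub_distrib]
  rw [h1, map_add, hc_dt_g α f g d hg]
  rw [hc_eq_zero α (P := (· ≤ M - 1)) (by simp), add_zero]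
  refine Submodule.sum_mem _ fun i _ => SP_mul α ?_ (pd_fg α f g d hf hg i) (hξ i)
  intro a b (ha : a ≤ _) (hb : b ≤ _)
  show a + b ≤ _
  omega

lemma dt_mem_span (f : S) (ξ) : dt f ξ ∈ Ideal.span (Set.range fun i => pderiv i f) :=
  Ideal.sum_mem _ fun i _ => Ideal.mul_mem_right _ _ (Ideal.subset_span ⟨i, rfl⟩)

lemma span_exists (f p : S) (h : p ∈ Ideal.span (Set.range fun i => pderiv i f)) :
    ∃ ξ, dt f ξ = p := by
  obtain ⟨c, hc⟩ := Ideal.mem_span_range_iff_exists_fun.1 h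
  exact ⟨c, by rw [← hc]; simp [dt, mul_comm]⟩

lemma strict (hf : f ∈ SP α (· ≤ (d : ℤ))) (hg : g = hc α d f)
    (hfin : Module.Finite ℂ (S ⧸ Ideal.span (Set.range fun i => pderiv i g))) (m : ℤ) (k : ℕ) :
    ∀ (ξ : Fin N → S) (_ : ∀ i, ξ i ∈ SP α (· ≤ m + k - d + α i))
      (_ : dt f ξ ∈ SP α (· ≤ m)),
      hc α m (dt f ξ) ∈ Ideal.span (Set.range fun i => pderiv i g) := by
  induction k with
  | zero =>
    intro ξ h1 _
    rw [dt_top α f g d hf hg m ξ (by simpa using h1)]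
    exact dt_mem_span _ _
  | succ k ih =>
    intro ξ h1 h2
    set M : ℤ := m + (k + 1 : ℕ) with hM
    have h3 := dt_top α f g d hf hg M ξ h1
    rw [hc_eq_zero α (P := (· ≤ m)) (by simp [hM]) h2] at h3
    obtain ⟨θ, hθ, h4⟩ := koszul_H1 (fun i => pderiv i g) hfin _ h3.symm
    let θ' : Fin N → Fin N → S := fun i j => hc α (M - 2 * d + α i + α j) (θ i j)
    have hθ' : ∀ i j, θ' i j = - θ' j i := by
      intro i j
      simp only [θ']
      rw [hθ, map_neg]
      congr 3; omega
    have h5 : ∀ i, hc α (M - d + α i) (ξ i) = ∑ j, pderiv j g * θ' i j := by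
      intro i
      rw [← hc_self α (hc_SP α (M - d + α i) (ξ i)), h4 i, map_sum]
      refine Finset.sum_congr rfl fun j _ => ?_
      rw [hc_mul α _ _ (pd_g α f g d hg j)]
      simp only [θ']
      congr 2; congr 1; omega
    have h6 : dt f (ξ - fun i => ∑ j, pderiv j f * θ' i j) = dt f ξ := by
      rw [dt_sub]
      have := antisym_sum (fun i j => pderiv i f * pderiv j f) θ'
        (fun i j => mul_comm _ _) hθ'
      have h7 : dt f (fun i => ∑ j, pderiv j f * θ' i j) = 0 := by
        rw [← this]
        simp [dt, Finset.mul_sum, mul_assoc]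
      rw [h7, sub_zero]
    rw [← h6]
    refine ih _ (fun i => ?_) (h6 ▸ h2)
    have h8 : (ξ - fun i => ∑ j, pderiv j f * θ' i j) i
        = (ξ i - hc α (M - d + α i) (ξ i)) - ∑ j, (pderiv j f - pderiv j g) * θ' i j := by
      rw [h5 i]
      simp [sub_mul, Finset.sum_sub_distrib]
    rw [h8]
    refine Submodule.sub_mem _ ?_ ?_
    · refine SP_mono α ?_ (sub_hc_SP α (h1 i))
      intro a (ha : a ≤ _)
      show a ≤ _
      push_cast at ha
      omega
    · refine Submodule.sum_mem _ fun j _ => SP_mul α ?_ (pd_fg α f g d hf hg j) (hc_SP α _ _)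
      intro a b (ha : a ≤ _) (hb : b = _)
      show a + b ≤ _
      push_cast at hM
      omega

variable (I : Finset (Fin N →₀ ℕ))

lemma indep_f (hf : f ∈ SP α (· ≤ (d : ℤ))) (hg : g = hc α d f)
    (hfin : Module.Finite ℂ (S ⧸ Ideal.span (Set.range fun i => pderiv i g)))
    (hI : LinearIndependent ℂ (fun β : I =>
      Ideal.Quotient.mk (Ideal.span (Set.range fun i => pderiv i g))
        (monomial (β : Fin N →₀ ℕ) (1 : ℂ))))
    (b : I → ℂ) (hb : ∑ β : I, monomial (β : Fin N →₀ ℕ) (b β) ∈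
      Ideal.span (Set.range fun i => pderiv i f)) : b = 0 := by
  classical
  by_contra hne
  have hne' : (Finset.univ.filter fun β : I => b β ≠ 0).Nonempty := by
    by_contra h
    rw [Finset.not_nonempty_iff_eq_empty, Finset.filter_eq_empty_iff] at h
    apply hne
    funext β
    simpa using h (Finset.mem_univ β)
  obtain ⟨γ, hγ, hmax⟩ := Finset.exists_max_image _ (fun β : I => wt α β) hne'
  obtain ⟨ξ, hξ⟩ := span_exists _ _ hb
  have hle : dt f ξ ∈ SP α (· ≤ (wt α γ : ℤ)) := by
    rw [hξ]
    refine Submodule.sum_mem _ fun β _ => ?_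
    by_cases h0 : b β = 0
    · simp [h0]
    · refine monomial_SP α _ ?_
      exact_mod_cast hmax β (by simpa using h0)
  have hK : ∃ k : ℕ, ∀ i, ξ i ∈ SP α (· ≤ (wt α γ : ℤ) + k - d + α i) := by
    choose K hK using fun i => exists_bound α (ξ i)
    refine ⟨(∑ i, K i) + d, fun i => SP_mono α ?_ (hK i)⟩
    intro a (ha : a ≤ _)
    have := Finset.single_le_sum (f := K) (fun _ _ => Nat.zero_le _) (Finset.mem_univ i)
    show a ≤ _
    push_cast
    zify at this
    push_cast at this
    omega
  obtain ⟨k, hk⟩ := hK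
  have h1 := strict α f g d hf hg hfin _ k ξ hk hle
  rw [hξ, map_sum] at h1
  have h2 : ∀ β : I, hc α (wt α γ) (monomial (β : Fin N →₀ ℕ) (b β))
      = (if wt α β = wt α γ then b β else 0) • monomial (β : Fin N →₀ ℕ) (1 : ℂ) := by
    intro β
    rw [hc, Dg_monomial, smul_monomial]
    congr 1
    simp
  simp_rw [h2] at h1
  rw [← Ideal.Quotient.eq_zero_iff_mem, map_sum] at h1
  have h3 := Fintype.linearIndependent_iff.1 hI (fun β => if wt α β = wt α γ then b β else 0)
    (by
      rw [← h1]
      refine Finset.sum_congr rfl fun β _ => ?_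
      exact (map_smul (Ideal.Quotient.mkₐ ℂ _) _ _).symm) γ
  simp at h3 hγ
  exact hγ h3

lemma decomp_g (hg : g = hc α d f)
    (hI : Submodule.span ℂ (Set.range fun β : I =>
      Ideal.Quotient.mk (Ideal.span (Set.range fun i => pderiv i g))
        (monomial (β : Fin N →₀ ℕ) (1 : ℂ))) = ⊤) (p : S) (m : ℤ) :
    ∃ ξ : Fin N → S, (∀ i, ξ i ∈ SP α (· = m - d + α i)) ∧
      hc α m p - dt g ξ ∈ Submodule.span ℂ ((fun β => monomial β (1 : ℂ)) '' {β | β ∈ I ∧ (wt α β : ℤ) = m}) := by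
  classical
  have h1 : Ideal.Quotient.mk (Ideal.span (Set.range fun i => pderiv i g)) p ∈
    Submodule.span ℂ (Set.range fun β : I =>
      Ideal.Quotient.mk (Ideal.span (Set.range fun i => pderiv i g))
        (monomial (β : Fin N →₀ ℕ) (1 : ℂ))) := hI ▸ Submodule.mem_top
  rw [Submodule.mem_span_range_iff_exists_fun] at h1
  obtain ⟨c, hc1⟩ := h1
  have h2 : p - ∑ β : I, c β • monomial (β : Fin N →₀ ℕ) (1 : ℂ) ∈
      Ideal.span (Set.range fun i => pderiv i g) := by
    rw [← Ideal.Quotient.eq_zero_iff_mem, map_sub, map_sum, ← hc1, sub_eq_zero]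
    refine Finset.sum_congr rfl fun β _ => ?_
    exact (map_smul (Ideal.Quotient.mkₐ ℂ _) _ _).symm
  obtain ⟨ξ, hξ⟩ := span_exists _ _ h2
  refine ⟨fun i => hc α (m - d + α i) (ξ i), fun i => hc_SP α _ _, ?_⟩
  rw [← hc_dt_g α f g d hg, hξ, map_sub, sub_sub_cancel, map_sum]
  refine Submodule.sum_mem _ fun β _ => ?_
  rw [map_smul]
  refine Submodule.smul_mem _ _ ?_
  rw [hc, Dg_monomial]
  split_ifs with h
  · rw [mul_one]
    exact Submodule.subset_span ⟨β, ⟨β.2, h⟩, rfl⟩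
  · simp

end Deg

section Abs
variable {H ι : Type*} [AddCommGroup H] [Module ℂ H] [Fintype ι]
  (σ T : H →ₗ[ℂ] H) (x : ι → H) (w : ι → ℕ) (d : ℕ)

/-- index set -/
def idx (m : ℤ) : Set (ι × ℕ) := {q | (w q.1 : ℤ) + q.2 * d ≤ m}

lemma idx_finite (hd : 0 < d) (m : ℤ) : (idx w d m).Finite := by
  refine Set.Finite.subset ((Set.finite_univ (α := ι)).prod (Set.finite_lt_nat (m.toNat + 1))) ?_
  rintro ⟨β, k⟩ h
  have h1 : (w β : ℤ) + k * d ≤ m := h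
  refine ⟨trivial, ?_⟩
  show k < m.toNat + 1
  have h2 : (k : ℤ) ≤ k * d := by
    have : (1 : ℤ) ≤ d := by exact_mod_cast hd
    nlinarith [Int.natCast_nonneg k]
  omega

/-- filtration -/
def FF (m : ℤ) : Submodule ℂ H :=
  Submodule.span ℂ ((fun q : ι × ℕ => (σ ^ q.2) (x q.1)) '' idx w d m)

def GG (U : H →ₗ[ℂ] H) (m : ℤ) : Submodule ℂ H :=
  Submodule.span ℂ ((fun q : ι × ℕ => (U ^ q.2) (x q.1)) '' idx w d m)

lemma idx_mono {m m' : ℤ} (h : m ≤ m') : idx w d m ⊆ idx w d m' := fun _ hq => le_trans hq h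

lemma GG_mono (U : H →ₗ[ℂ] H) {m m' : ℤ} (h : m ≤ m') : GG x w d U m ≤ GG x w d U m' :=
  Submodule.span_mono (Set.image_mono (idx_mono w d h))

lemma GG_step (U : H →ₗ[ℂ] H) (m : ℤ) {v : H} (hv : v ∈ GG x w d U m) :
    U v ∈ GG x w d U (m + d) := by
  have : GG x w d U m ≤ (GG x w d U (m + d)).comap U := by
    refine Submodule.span_le.2 ?_
    rintro _ ⟨⟨β, k⟩, hq, rfl⟩
    refine Submodule.subset_span ⟨(β, k + 1), ?_, ?_⟩
    · have : (w β : ℤ) + k * d ≤ m := hq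
      show (w β : ℤ) + (k + 1 : ℕ) * d ≤ m + d
      push_cast
      linarith
    · simp [pow_succ']
  exact this hv

lemma sig_indep (hinj : Function.Injective σ)
    (hind : ∀ b : ι → ℂ, ∑ β, b β • x β ∈ LinearMap.range σ → b = 0) (K : ℕ) :
    ∀ b : ι → ℕ → ℂ, ∑ k ∈ Finset.range K, (σ ^ k) (∑ β, b β k • x β) = 0 →
      ∀ β, ∀ k < K, b β k = 0 := by
  induction K with
  | zero => intro b _ β k hk; omega
  | succ K ih =>
    intro b hb
    rw [Finset.sum_range_succ'] at hb
    have h1 : ∑ k ∈ Finset.range K, (σ ^ (k + 1)) (∑ β, b β (k + 1) • x β)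
        = σ (∑ k ∈ Finset.range K, (σ ^ k) (∑ β, b β (k + 1) • x β)) := by
      rw [map_sum]
      exact Finset.sum_congr rfl fun k _ => by rw [pow_succ']; rfl
    rw [h1] at hb
    have h2 : (fun β => b β 0) = 0 := by
      apply hind
      refine ⟨- ∑ k ∈ Finset.range K, (σ ^ k) (∑ β, b β (k + 1) • x β), ?_⟩
      rw [map_neg, neg_eq_iff_add_eq_zero]
      simpa using hb
    have h3 : ∀ β, b β 0 = 0 := fun β => congrFun h2 β
    have h4 : ∑ k ∈ Finset.range K, (σ ^ k) (∑ β, b β (k + 1) • x β) = 0 := by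
      apply hinj
      rw [map_zero, ← hb]
      simp [h3]
    intro β k hk
    cases k with
    | zero => exact h3 β
    | succ k => exact ih (fun β k => b β (k + 1)) h4 β k (by omega)

lemma sig_linindep (hinj : Function.Injective σ)
    (hind : ∀ b : ι → ℂ, ∑ β, b β • x β ∈ LinearMap.range σ → b = 0) :
    LinearIndependent ℂ (fun q : ι × ℕ => (σ ^ q.2) (x q.1)) := by
  classical
  rw [linearIndependent_iff]
  intro l hl
  obtain ⟨K, hK⟩ : ∃ K, ∀ q ∈ l.support, q.2 < K :=
    ⟨l.support.sup (fun q => q.2) + 1, fun q hq =>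
      Nat.lt_succ_of_le (Finset.le_sup (f := fun q : ι × ℕ => q.2) hq)⟩
  have h1 : ∑ k ∈ Finset.range K, (σ ^ k) (∑ β, l (β, k) • x β) = 0 := by
    rw [← hl, Finsupp.linearCombination_apply, Finsupp.sum_of_support_subset (s := Finset.univ ×ˢ Finset.range K)]
    · rw [Finset.sum_product_right]
      simp [map_sum]
    · intro q hq; simp [hK q hq]
    · simp
  have h2 := sig_indep σ x hinj hind K (fun β k => l (β, k)) h1
  ext ⟨β, k⟩
  by_cases h : (β, k) ∈ l.support
  · exact h2 β k (hK _ h)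
  · simpa using h

lemma FF_step (m : ℤ) {v : H} (hv : v ∈ FF σ x w d m) : σ v ∈ FF σ x w d (m + d) :=
  GG_step x w d σ m hv

lemma FF_mono {m m' : ℤ} (h : m ≤ m') : FF σ x w d m ≤ FF σ x w d m' := GG_mono x w d σ h

lemma tri (hcomm : ∀ v, T (σ v) = σ (T v) + σ (σ v)) (A : ι → ℝ)
    (hT : ∀ β, T (x β) - (A β : ℂ) • σ (x β) ∈ FF σ x w d (w β + d - 1)) (β : ι) (k : ℕ) :
    (T + σ) ((σ ^ k) (x β)) - ((A β : ℂ) + 1 + k) • (σ ^ (k + 1)) (x β)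
      ∈ FF σ x w d (w β + (k + 1) * d - 1) := by
  induction k with
  | zero =>
    have h := hT β
    have e1 : (T + σ) ((σ ^ 0) (x β)) - ((A β : ℂ) + 1 + (0 : ℕ)) • (σ ^ (0 + 1)) (x β)
        = T (x β) - (A β : ℂ) • σ (x β) := by
      rw [pow_zero, zero_add, pow_one, Nat.cast_zero, add_zero, add_smul, one_smul,
        Module.End.one_apply, LinearMap.add_apply]
      abel
    have e2 : (w β : ℤ) + ((0 : ℕ) + 1) * d - 1 = w β + d - 1 := by push_cast; ring
    rw [e1, e2]
    exact h
  | succ k ih =>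
    have h1 := FF_step σ x w d _ ih
    have e2 : (w β : ℤ) + ((k + 1 : ℕ) + 1) * d - 1 = w β + (k + 1) * d - 1 + d := by
      push_cast; ring
    rw [e2]
    convert h1 using 1
    simp only [pow_succ', Module.End.mul_apply, LinearMap.add_apply, hcomm, map_sub, map_smul,
        map_add]
    push_cast
    simp only [add_smul, one_smul]
    abel

lemma F_le_G (hd : 0 < d) (hcomm : ∀ v, T (σ v) = σ (T v) + σ (σ v)) (A : ι → ℝ)
    (hA : ∀ β, 0 < A β)
    (hT : ∀ β, T (x β) - (A β : ℂ) • σ (x β) ∈ FF σ x w d (w β + d - 1)) (n : ℕ) :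
    ∀ m : ℤ, m < n → FF σ x w d m ≤ GG x w d (T + σ) m := by
  induction n with
  | zero =>
    intro m hm
    refine Submodule.span_le.2 ?_
    rintro _ ⟨⟨β, k⟩, hq, rfl⟩
    have h1 : (w β : ℤ) + k * d ≤ m := hq
    have : (0 : ℤ) ≤ k * d := by positivity
    push_cast at hm
    omega
  | succ n ih =>
    intro m hm
    push_cast at hm
    refine Submodule.span_le.2 ?_
    rintro _ ⟨⟨β, k⟩, hq, rfl⟩
    have h1 : (w β : ℤ) + k * d ≤ m := hq
    cases k with
    | zero => exact Submodule.subset_span ⟨(β, 0), hq, by simp⟩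
    | succ k =>
      push_cast at h1
      have h2 := tri σ T x w d hcomm A hT β k
      have h3 : (T + σ) ((σ ^ k) (x β)) ∈ GG x w d (T + σ) m := by
        have : (σ ^ k) (x β) ∈ FF σ x w d (m - d) := by
          refine Submodule.subset_span ⟨(β, k), ?_, rfl⟩
          show (w β : ℤ) + k * d ≤ m - d
          linarith
        have := GG_step x w d (T + σ) _ (ih (m - d) (by omega) this)
        simpa using this
      have h4 := GG_mono x w d (T + σ) (m' := m) (by linarith) (ih _ (by linarith) h2)
      have h5 := Submodule.sub_mem _ h3 h4
      rw [sub_sub_cancel] at h5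
      have h6 : (A β : ℂ) + 1 + k ≠ 0 := by
        have : (0 : ℝ) < A β + 1 + k := by have := hA β; positivity
        exact_mod_cast this.ne'
      exact (Submodule.smul_mem_iff _ h6).1 h5

lemma u_linindep (hd : 0 < d) (hcomm : ∀ v, T (σ v) = σ (T v) + σ (σ v)) (A : ι → ℝ)
    (hA : ∀ β, 0 < A β)
    (hT : ∀ β, T (x β) - (A β : ℂ) • σ (x β) ∈ FF σ x w d (w β + d - 1))
    (hinj : Function.Injective σ)
    (hind : ∀ b : ι → ℂ, ∑ β, b β • x β ∈ LinearMap.range σ → b = 0) :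
    LinearIndependent ℂ (fun q : ι × ℕ => ((T + σ) ^ q.2) (x q.1)) := by
  classical
  have hm : ∀ m : ℤ, LinearIndependent ℂ
      (fun q : idx w d m => ((T + σ) ^ q.1.2) (x q.1.1)) := by
    intro m
    have : Fintype (idx w d m) := (idx_finite w d hd m).fintype
    rw [linearIndependent_iff_card_le_finrank_span]
    have h1 := (sig_linindep σ x hinj hind).comp (fun q : idx w d m => q.1) Subtype.val_injective
    rw [linearIndependent_iff_card_eq_finrank_span] at h1
    rw [h1]
    have h2 : Module.Finite ℂ (Submodule.span ℂ
        (Set.range fun q : idx w d m => ((T + σ) ^ q.1.2) (x q.1.1))) :=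
      Module.Finite.span_of_finite _ (Set.finite_range _)
    apply Submodule.finrank_mono
    have h3 := F_le_G σ T x w d hd hcomm A hA hT (m.toNat + 1) m (by omega)
    rw [FF, GG, Set.image_eq_range, Set.image_eq_range] at h3
    exact h3
  rw [linearIndependent_iff_finset_linearIndependent]
  intro s
  have hs : ∀ q ∈ s, q ∈ idx w d ((s.sup fun q => w q.1 + q.2 * d : ℕ) : ℤ) := by
    intro q hq
    have := Finset.le_sup (f := fun q : ι × ℕ => w q.1 + q.2 * d) hq
    show (w q.1 : ℤ) + q.2 * d ≤ _
    exact_mod_cast this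
  exact (hm _).comp (fun q : s => ⟨q.1, hs q.1 q.2⟩) (by
    intro a b h
    exact Subtype.ext (congrArg (fun z => z.1) h))

theorem abstract_free (hd : 0 < d) (hcomm : ∀ v, T (σ v) = σ (T v) + σ (σ v)) (A : ι → ℝ)
    (hA : ∀ β, 0 < A β)
    (hT : ∀ β, T (x β) - (A β : ℂ) • σ (x β) ∈ FF σ x w d (w β + d - 1))
    (hinj : Function.Injective σ)
    (hind : ∀ b : ι → ℂ, ∑ β, b β • x β ∈ LinearMap.range σ → b = 0)
    (hF : ∀ v, ∃ m, v ∈ FF σ x w d m) (v : H) (hv : v ∈ LinearMap.range σ) :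
    ∃! c : ι → Polynomial ℂ, v = ∑ β, Polynomial.aeval T (c β) (σ (x β)) := by
  classical
  obtain ⟨v, rfl⟩ := hv
  have hpow : ∀ (k : ℕ) v, (T ^ k) (σ v) = σ (((T + σ) ^ k) v) := by
    intro k
    induction k with
    | zero => intro v; simp
    | succ k ih =>
      intro v
      rw [pow_succ', pow_succ', Module.End.mul_apply, Module.End.mul_apply, ih, hcomm]
      simp
  have hae : ∀ (p : Polynomial ℂ) v, Polynomial.aeval T p (σ v)
      = σ (Polynomial.aeval (T + σ) p v) := by
    intro p v
    simp only [Polynomial.aeval_eq_sum_range, LinearMap.sum_apply, LinearMap.smul_apply, map_sum,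
      map_smul, hpow]
  simp only [hae, ← map_sum, hinj.eq_iff]
  have hli := u_linindep σ T x w d hd hcomm A hA hT hinj hind
  set U := T + σ with hU
  let Φ : (ι → Polynomial ℂ) →ₗ[ℂ] H :=
    ∑ β, (LinearMap.applyₗ (x β)).comp ((Polynomial.aeval U).toLinearMap.comp (LinearMap.proj β))
  have hΦ : ∀ c, Φ c = ∑ β, Polynomial.aeval U (c β) (x β) := by
    intro c; simp [Φ]
  have hsurj : ∃ c, v = Φ c := by
    obtain ⟨m, hm⟩ := hF v
    have h1 := F_le_G σ T x w d hd hcomm A hA hT (m.toNat + 1) m (by omega) hm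
    have h2 : GG x w d U m ≤ LinearMap.range Φ := by
      refine Submodule.span_le.2 ?_
      rintro _ ⟨⟨β, k⟩, _, rfl⟩
      refine ⟨Pi.single β (Polynomial.X ^ k), ?_⟩
      rw [hΦ, Finset.sum_eq_single β]
      · simp
      · intro γ _ h; simp [h]
      · simp
    obtain ⟨c, hc⟩ := h2 h1
    exact ⟨c, hc.symm⟩
  have hker : ∀ c, Φ c = 0 → c = 0 := by
    intro c hc
    obtain ⟨K, hK⟩ : ∃ K, ∀ β, (c β).natDegree < K :=
      ⟨Finset.univ.sup (fun β => (c β).natDegree) + 1, fun β =>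
        Nat.lt_succ_of_le (Finset.le_sup (f := fun β => (c β).natDegree) (Finset.mem_univ β))⟩
    rw [hΦ] at hc
    have h1 : ∑ q ∈ Finset.univ ×ˢ Finset.range K, (c q.1).coeff q.2 • (U ^ q.2) (x q.1) = 0 := by
      rw [Finset.sum_product, ← hc]
      refine Finset.sum_congr rfl fun β _ => ?_
      rw [Polynomial.aeval_eq_sum_range' (hK β)]
      simp [LinearMap.sum_apply]
    have h2 := linearIndependent_iff'.1 hli _ _ h1
    funext β
    ext k
    by_cases hk : k < K
    · exact h2 (β, k) (by simp [hk])
    · simp only [Pi.zero_apply, Polynomial.coeff_zero]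
      exact Polynomial.coeff_eq_zero_of_natDegree_lt (by have := hK β; omega)
  obtain ⟨c, hc⟩ := hsurj
  refine ⟨c, by simpa [hΦ] using hc, fun c' hc' => ?_⟩
  have h1 : v = Φ c' := by simpa [hΦ] using hc'
  exact sub_eq_zero.1 (hker _ (by rw [map_sub, ← h1, ← hc, sub_self]))

end Abs

section Fin5
variable {N : ℕ} (α : Fin N → ℕ)

local notation "S" => MvPolynomial (Fin N) ℂ

/-- Euler field applied to f -/
noncomputable def Eu (f : MvPolynomial (Fin N) ℂ) : MvPolynomial (Fin N) ℂ :=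
  ∑ i, C (α i : ℂ) * X i * pderiv i f

noncomputable def sg0 (f : MvPolynomial (Fin N) ℂ) : S →ₗ[ℂ] S :=
  (LinearMap.mulLeft ℂ (Eu α f)).comp (Bop α)

lemma sg0_apply (f p : S) : sg0 α f p = Eu α f * Bop α p := rfl

lemma sg0_dt (f p : S) : sg0 α f p = dt f (fun i => C (α i : ℂ) * X i * Bop α p) := by
  rw [sg0_apply, Eu, dt, Finset.sum_mul]
  exact Finset.sum_congr rfl fun i _ => by ring

variable (hα : ∀ i, 0 < α i) (hN : 2 ≤ N)

lemma sg0_J (hα : ∀ i, 0 < α i) (hN : 2 ≤ N) (f : S) : JJ f ≤ (JJ f).comap (sg0 α f) := by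
  intro p hp
  rw [Submodule.mem_comap, sg0_dt]
  apply D1 α hα hN
  rw [dv_B α hα hN]
  exact hp

noncomputable def sg (hα : ∀ i, 0 < α i) (hN : 2 ≤ N) (f : MvPolynomial (Fin N) ℂ) :
    (MvPolynomial (Fin N) ℂ ⧸ JJ f) →ₗ[ℂ] (MvPolynomial (Fin N) ℂ ⧸ JJ f) :=
  Submodule.mapQ (JJ f) (JJ f) (sg0 α f) (sg0_J α hα hN f)

lemma sg_mk (f p : S) : sg α hα hN f ((JJ f).mkQ p) = (JJ f).mkQ (sg0 α f p) := rfl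

lemma mk_eq (f p q : S) : (JJ f).mkQ p = (JJ f).mkQ q ↔ p - q ∈ JJ f := by
  rw [Submodule.mkQ_apply, Submodule.mkQ_apply, Submodule.Quotient.eq]

lemma sg_dt (f : S) (ξ : Fin N → S) : (JJ f).mkQ (dt f ξ) = sg α hα hN f ((JJ f).mkQ (dv ξ)) := by
  rw [sg_mk, mk_eq, sg0_dt, ← dt_sub]
  apply dt_closed_mem α hα hN
  rw [dv_sub, dv_B α hα hN, sub_self]

lemma JJ_stable (f p : S) (hp : p ∈ JJ f) : f * p ∈ JJ f := by
  have : JJ f ≤ (JJ f).comap (LinearMap.mulLeft ℂ f) := by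
    refine Submodule.span_le.2 ?_
    rintro _ ⟨h, i, j, hij, rfl⟩
    refine Submodule.subset_span ⟨f * h, i, j, hij, ?_⟩
    simp only [LinearMap.mulLeft_apply, Derivation.leibniz, smul_eq_mul]
    ring
  exact this hp

noncomputable def TT (f : MvPolynomial (Fin N) ℂ) :
    (MvPolynomial (Fin N) ℂ ⧸ JJ f) →ₗ[ℂ] (MvPolynomial (Fin N) ℂ ⧸ JJ f) :=
  Submodule.mapQ (JJ f) (JJ f) (LinearMap.mulLeft ℂ f) (fun p hp => JJ_stable f p hp)

lemma TT_mk (f p : S) : TT f ((JJ f).mkQ p) = (JJ f).mkQ (f * p) := rfl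

lemma TT_pow (f p : S) (k : ℕ) : (TT f ^ k) ((JJ f).mkQ p) = (JJ f).mkQ (f ^ k * p) := by
  induction k with
  | zero => simp
  | succ k ih => rw [pow_succ', Module.End.mul_apply, ih, TT_mk, pow_succ', mul_assoc]

lemma TT_aeval (f p : S) (c : Polynomial ℂ) :
    Polynomial.aeval (TT f) c ((JJ f).mkQ p) = (JJ f).mkQ (Polynomial.aeval f c * p) := by
  rw [Polynomial.aeval_eq_sum_range, Polynomial.aeval_eq_sum_range, LinearMap.sum_apply,
    Finset.sum_mul, map_sum]
  refine Finset.sum_congr rfl fun k _ => ?_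
  rw [LinearMap.smul_apply, TT_pow, smul_mul_assoc, map_smul]

lemma dv_mul (f : S) (ξ : Fin N → S) : dv (fun i => f * ξ i) = f * dv ξ + dt f ξ := by
  rw [dv, dv, dt, Finset.mul_sum, ← Finset.sum_add_distrib]
  refine Finset.sum_congr rfl fun i _ => ?_
  rw [Derivation.leibniz, smul_eq_mul, smul_eq_mul]
  ring

lemma comm_sT (f : S) (v) : TT f (sg α hα hN f v)
    = sg α hα hN f (TT f v) + sg α hα hN f (sg α hα hN f v) := by
  obtain ⟨p, rfl⟩ := (JJ f).mkQ_surjective v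
  rw [sg_mk, TT_mk, TT_mk, ← map_add, ← map_add]
  have h1 : f * sg0 α f p = dt f (fun i => f * (C (α i : ℂ) * X i * Bop α p)) := by
    rw [sg0_dt, dt, dt, Finset.mul_sum]
    exact Finset.sum_congr rfl fun i _ => by ring
  have h2 : dv (fun i => f * (C (α i : ℂ) * X i * Bop α p)) = f * p + sg0 α f p := by
    rw [dv_mul, dv_B α hα hN, sg0_dt]
  rw [h1, sg_dt α hα hN, h2]

variable (f g : MvPolynomial (Fin N) ℂ) (d : ℕ) (I : Finset (Fin N →₀ ℕ))

noncomputable def xx (β : I) : MvPolynomial (Fin N) ℂ ⧸ JJ f :=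
  (JJ f).mkQ (monomial (β : Fin N →₀ ℕ) (1 : ℂ))

def ww (β : I) : ℕ := wt α (β : Fin N →₀ ℕ)

lemma sum_SP {P : ℤ → Prop} {ξ : Fin N → S} (h : ∀ i, ξ i ∈ SP α P) : ∑ i, ξ i ∈ SP α P :=
  Submodule.sum_mem _ fun i _ => h i

lemma mainF (hf : f ∈ SP α (· ≤ (d : ℤ))) (hg : g = hc α d f)
    (hd : 0 < d)
    (hI : Submodule.span ℂ (Set.range fun β : I =>
      Ideal.Quotient.mk (Ideal.span (Set.range fun i => pderiv i g))
        (monomial (β : Fin N →₀ ℕ) (1 : ℂ))) = ⊤) (k : ℕ) :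
    ∀ m : ℤ, m < k → ∀ p ∈ SP α (· ≤ m),
      (JJ f).mkQ p ∈ FF (sg α hα hN f) (xx f I) (ww α I) d m := by
  induction k with
  | zero =>
    intro m hm p hp
    rw [SP_neg α (SP_mono α (fun k h => by
      have : k ≤ m := h
      show k < 0
      push_cast at hm; omega) hp), map_zero]
    exact Submodule.zero_mem _
  | succ k ih =>
    intro m hm p hp
    push_cast at hm
    obtain ⟨ξ, hξ, hs⟩ := decomp_g α f g d I hg hI p m
    have hsplit : p = (hc α m p - dt g ξ) + dt f ξ
        + ((p - hc α m p) - ∑ i, (pderiv i f - pderiv i g) * ξ i) := by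
      simp only [dt, sub_mul, Finset.sum_sub_distrib]
      ring
    rw [hsplit, map_add, map_add]
    refine Submodule.add_mem _ (Submodule.add_mem _ ?_ ?_) ?_
    · have : Submodule.span ℂ ((fun β => monomial β (1 : ℂ)) '' {β | β ∈ I ∧ (wt α β : ℤ) = m})
          ≤ (FF (sg α hα hN f) (xx f I) (ww α I) d m).comap (JJ f).mkQ := by
        refine Submodule.span_le.2 ?_
        rintro _ ⟨β, ⟨hβ, hw⟩, rfl⟩
        refine Submodule.subset_span ⟨(⟨β, hβ⟩, 0), ?_, by simp [xx]⟩
        show ((wt α β : ℕ) : ℤ) + (0 : ℕ) * d ≤ m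
        rw [hw]; simp
      exact this hs
    · rw [sg_dt α hα hN]
      have h1 := ih (m - d) (by omega) (dv ξ) (sum_SP α fun i =>
        SP_pderiv α i (fun k h => by
          have : k + α i = m - d + α i := h
          show k ≤ m - d
          omega) (hξ i))
      have h2 := FF_step _ _ _ _ _ h1
      rwa [sub_add_cancel] at h2
    · refine FF_mono _ _ _ _ (by omega : m - 1 ≤ m) (ih (m - 1) (by omega) _ ?_)
      refine Submodule.sub_mem _ (sub_hc_SP α hp) (sum_SP α fun i => ?_)
      refine SP_mul α (fun a b ha hb => ?_) (pd_fg α f g d hf hg i) (hξ i)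
      have ha' : a ≤ (d : ℤ) - α i - 1 := ha
      have hb' : b = m - d + α i := hb
      show a + b ≤ m - 1
      omega

lemma JJ_le : JJ f ≤ (Ideal.span (Set.range fun i => pderiv i f)).restrictScalars ℂ := by
  refine Submodule.span_le.2 ?_
  rintro _ ⟨h, i, j, hij, rfl⟩
  exact Ideal.sub_mem _ (Ideal.mul_mem_right _ _ (Ideal.subset_span ⟨i, rfl⟩))
    (Ideal.mul_mem_right _ _ (Ideal.subset_span ⟨j, rfl⟩))

lemma sg0_mem (p : S) : sg0 α f p ∈ Ideal.span (Set.range fun i => pderiv i f) := by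
  rw [sg0_dt]; exact dt_mem_span f _

lemma range_sg : LinearMap.range (sg α hα hN f)
    = ((Ideal.span (Set.range fun i => pderiv i f)).restrictScalars ℂ).map (JJ f).mkQ := by
  apply le_antisymm
  · rintro _ ⟨v, rfl⟩
    obtain ⟨p, rfl⟩ := (JJ f).mkQ_surjective v
    exact ⟨sg0 α f p, sg0_mem α f p, rfl⟩
  · rintro _ ⟨p, hp, rfl⟩
    obtain ⟨ξ, rfl⟩ := span_exists f p hp
    exact ⟨_, (sg_dt α hα hN f ξ).symm⟩

lemma mem_of_mk {p : S} (h : (JJ f).mkQ p ∈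
    ((Ideal.span (Set.range fun i => pderiv i f)).restrictScalars ℂ).map (JJ f).mkQ) :
    p ∈ Ideal.span (Set.range fun i => pderiv i f) := by
  obtain ⟨q, hq, h1⟩ := h
  have h2 := JJ_le f ((mk_eq f _ _).1 h1)
  have := Ideal.sub_mem _ hq h2
  rwa [sub_sub_cancel] at this

lemma fin_f (hf : f ∈ SP α (· ≤ (d : ℤ))) (hg : g = hc α d f)
    (hd : 0 < d) (hα : ∀ i, 0 < α i) (hN : 2 ≤ N)
    (hI : Submodule.span ℂ (Set.range fun β : I =>
      Ideal.Quotient.mk (Ideal.span (Set.range fun i => pderiv i g))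
        (monomial (β : Fin N →₀ ℕ) (1 : ℂ))) = ⊤) :
    Module.Finite ℂ (S ⧸ Ideal.span (Set.range fun i => pderiv i f)) := by
  set Q := Ideal.span (Set.range fun i => pderiv i f) with hQ
  let φ : S →ₗ[ℂ] S ⧸ Q := (Ideal.Quotient.mkₐ ℂ Q).toLinearMap
  have hφ : ∀ p ∈ Q, φ p = 0 := fun p hp => Ideal.Quotient.eq_zero_iff_mem.2 hp
  let ψ : (S ⧸ JJ f) →ₗ[ℂ] S ⧸ Q := (JJ f).liftQ φ (fun p hp => hφ p (JJ_le f hp))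
  have hψ : ∀ v, ψ (sg α hα hN f v) = 0 := by
    intro v
    obtain ⟨p, rfl⟩ := (JJ f).mkQ_surjective v
    exact hφ _ (sg0_mem α f p)
  have htop : Submodule.span ℂ (Set.range fun β : I => φ (monomial (β : Fin N →₀ ℕ) (1 : ℂ))) = ⊤ := by
    rw [eq_top_iff]
    rintro v -
    obtain ⟨p, rfl⟩ := Ideal.Quotient.mk_surjective v
    obtain ⟨K, hK⟩ := exists_bound α p
    have h1 := mainF α hα hN f g d I hf hg hd hI (K + 1) K (by push_cast; omega) p hK
    have h2 : FF (sg α hα hN f) (xx f I) (ww α I) d K ≤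
      (Submodule.span ℂ (Set.range fun β : I => φ (monomial (β : Fin N →₀ ℕ) (1 : ℂ)))).comap ψ := by
      refine Submodule.span_le.2 ?_
      rintro _ ⟨⟨β, k⟩, _, rfl⟩
      rw [SetLike.mem_coe, Submodule.mem_comap]
      cases k with
      | zero => exact Submodule.subset_span ⟨β, rfl⟩
      | succ k =>
        dsimp only
        rw [pow_succ', Module.End.mul_apply, hψ]
        exact Submodule.zero_mem _
    exact h2 h1
  exact ⟨htop ▸ Submodule.fg_span (Set.finite_range _)⟩

lemma Eu_g (hg : g = hc α d f) : Eu α g = (d : ℂ) • g := by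
  have h1 : Eu α g = Dg (fun β => (Wt α : ℂ) + wt α β) g - (Wt α : ℂ) • g := by
    rw [← euler_dv]
    simp only [Derivation.leibniz, smul_eq_mul, Finset.sum_add_distrib, Eu, pderiv_C,
      pderiv_X_self, Wt, mul_zero, mul_one, add_zero]
    push_cast
    rw [Finset.sum_smul, add_sub_assoc, left_eq_add, sub_eq_zero]
    exact Finset.sum_congr rfl fun i _ => by rw [smul_eq_C_mul]; ring
  rw [h1]
  ext β
  rw [coeff_sub, coeff_Dg, coeff_smul, coeff_smul, hg, coeff_hc]
  split_ifs with h
  · have : wt α β = d := by exact_mod_cast h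
    rw [this]; simp only [smul_eq_mul]; ring
  · simp

lemma rem_SP (hf : f ∈ SP α (· ≤ (d : ℤ))) (hg : g = hc α d f) (hd : 0 < d) :
    f - (d : ℂ)⁻¹ • Eu α f ∈ SP α (· ≤ (d : ℤ) - 1) := by
  have hd' : (d : ℂ) ≠ 0 := by exact_mod_cast hd.ne'
  have h1 : f - (d : ℂ)⁻¹ • Eu α f = (f - g) - (d : ℂ)⁻¹ • (Eu α f - Eu α g) := by
    rw [smul_sub, Eu_g α f g d hg, smul_smul, inv_mul_cancel₀ hd', one_smul]
    ring
  rw [h1]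
  refine Submodule.sub_mem _ (hg ▸ sub_hc_SP α hf) (Submodule.smul_mem _ _ ?_)
  have h2 : Eu α f - Eu α g = ∑ i, (C (α i : ℂ) * X i) * (pderiv i f - pderiv i g) := by
    simp only [Eu, mul_sub, Finset.sum_sub_distrib]
  rw [h2]
  refine sum_SP α fun i => ?_
  have h3 : (C (α i : ℂ) * X i : S) ∈ SP α (· = (α i : ℤ)) := by
    rw [C_mul_X_eq_monomial]
    exact monomial_SP α _ (by rw [wt_single]; simp)
  refine SP_mul α (fun a b ha hb => ?_) h3 (pd_fg α f g d hf hg i)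
  have ha' : a = α i := ha
  have hb' : b ≤ (d : ℤ) - α i - 1 := hb
  show a + b ≤ _
  omega

lemma sg_xx (hW : 0 < Wt α) (β : Fin N →₀ ℕ) :
    ((((Wt α + wt α β : ℝ) / d : ℝ)) : ℂ) • sg0 α f (monomial β 1)
      = monomial β 1 * ((d : ℂ)⁻¹ • Eu α f) := by
  have h0 : (Wt α : ℂ) + wt α β ≠ 0 := by
    have : Wt α + wt α β ≠ 0 := by omega
    exact_mod_cast this
  rw [sg0_apply, Bop, Dg_monomial, mul_one]
  have h1 : (monomial β (((Wt α : ℂ) + wt α β)⁻¹) : S)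
      = ((Wt α : ℂ) + wt α β)⁻¹ • monomial β 1 := by
    rw [smul_monomial, smul_eq_mul, mul_one]
  rw [h1, mul_smul_comm, mul_smul_comm, smul_smul, mul_comm (Eu α f)]
  congr 1
  push_cast
  rw [div_mul_eq_mul_div, mul_inv_cancel₀ h0, one_div]

theorem final (hα : ∀ i, 0 < α i) (hN : 2 ≤ N) (hf : f ∈ SP α (· ≤ (d : ℤ))) (hg : g = hc α d f) (hd : 0 < d)
    (hI : LinearIndependent ℂ (fun β : I =>
      Ideal.Quotient.mk (Ideal.span (Set.range fun i => pderiv i g))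
        (monomial (β : Fin N →₀ ℕ) (1 : ℂ))))
    (hIs : Submodule.span ℂ (Set.range fun β : I =>
      Ideal.Quotient.mk (Ideal.span (Set.range fun i => pderiv i g))
        (monomial (β : Fin N →₀ ℕ) (1 : ℂ))) = ⊤)
    (v : S ⧸ JJ f)
    (hv : v ∈ ((Ideal.span (Set.range fun i => pderiv i f)).restrictScalars ℂ).map (JJ f).mkQ) :
    ∃! c : I → Polynomial ℂ, v = ∑ β : I, (JJ f).mkQ (Polynomial.aeval f (c β) *
      (monomial (β : Fin N →₀ ℕ) 1 * ((d : ℂ)⁻¹ • Eu α f))) := by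
  have hfin_f := fin_f α f g d I hf hg hd hα hN hIs
  have hfin_g : Module.Finite ℂ (S ⧸ Ideal.span (Set.range fun i => pderiv i g)) :=
    ⟨hIs ▸ Submodule.fg_span (Set.finite_range _)⟩
  let A : I → ℝ := fun β => (Wt α + wt α (β : Fin N →₀ ℕ) : ℝ) / d
  have hA : ∀ β, 0 < A β := by
    intro β
    have := lt_Wt α hα hN ⟨0, by omega⟩
    have : 0 < Wt α := by omega
    show 0 < (Wt α + wt α (β : Fin N →₀ ℕ) : ℝ) / d
    positivity
  have hA' : ∀ β, (A β : ℂ) ≠ 0 := fun β => by exact_mod_cast (hA β).ne'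
  have hx : ∀ β : I, (A β : ℂ) • sg α hα hN f (xx f I β)
      = (JJ f).mkQ (monomial (β : Fin N →₀ ℕ) 1 * ((d : ℂ)⁻¹ • Eu α f)) := by
    intro β
    rw [xx, sg_mk, ← map_smul, ← sg_xx α f d (by have := lt_Wt α hα hN ⟨0, by omega⟩; omega)]
  have key := abstract_free (sg α hα hN f) (TT f) (xx f I) (ww α I) d hd (comm_sT α hα hN f) A hA
    (by
      intro β
      rw [hx, xx, TT_mk, ← map_sub]
      refine mainF α hα hN f g d I hf hg hd hIs (ww α I β + d) _ (by push_cast; omega) _ ?_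
      rw [mul_comm, ← mul_sub]
      refine SP_mul α (P := (· = (ww α I β : ℤ))) (fun a b ha hb => ?_) (monomial_SP α _ rfl)
        (rem_SP α f g d hf hg hd)
      have ha' : a = (ww α I β : ℤ) := ha
      have hb' : b ≤ (d : ℤ) - 1 := hb
      show a + b ≤ _
      omega)
    (by
      rw [← LinearMap.ker_eq_bot, eq_bot_iff]
      intro v hv
      obtain ⟨p, rfl⟩ := (JJ f).mkQ_surjective v
      rw [LinearMap.mem_ker, sg_mk, ← map_zero (JJ f).mkQ, mk_eq, sub_zero, sg0_dt] at hv
      have := D2 f hfin_f _ hv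
      rw [dv_B α hα hN] at this
      rw [Submodule.mem_bot, ← map_zero (JJ f).mkQ, mk_eq, sub_zero]
      exact this)
    (by
      intro b hb
      rw [range_sg] at hb
      have h1 : ∑ β, b β • xx f I β = (JJ f).mkQ (∑ β : I, monomial (β : Fin N →₀ ℕ) (b β)) := by
        rw [map_sum]
        refine Finset.sum_congr rfl fun β _ => ?_
        rw [xx, ← map_smul, smul_monomial, smul_eq_mul, mul_one]
      rw [h1] at hb
      exact indep_f α f g d I hf hg hfin_g hI b (mem_of_mk f hb))
    (by
      intro v
      obtain ⟨p, rfl⟩ := (JJ f).mkQ_surjective v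
      obtain ⟨K, hK⟩ := exists_bound α p
      exact ⟨K, mainF α hα hN f g d I hf hg hd hIs (K + 1) K (by push_cast; omega) p hK⟩)
    v (by rw [range_sg]; exact hv)
  have hterm : ∀ (β : I) (c : Polynomial ℂ), (JJ f).mkQ (Polynomial.aeval f c *
      (monomial (β : Fin N →₀ ℕ) 1 * ((d : ℂ)⁻¹ • Eu α f)))
      = Polynomial.aeval (TT f) ((A β : ℂ) • c) (sg α hα hN f (xx f I β)) := by
    intro β c
    rw [← TT_aeval, ← hx, map_smul, map_smul, LinearMap.smul_apply]
  simp only [hterm]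
  obtain ⟨c, hc1, hc2⟩ := key
  refine ⟨fun β => (A β : ℂ)⁻¹ • c β, ?_, fun c' hc' => ?_⟩
  · simp only [smul_smul, mul_inv_cancel₀ (hA' _), one_smul]
    exact hc1
  · have := hc2 (fun β => (A β : ℂ) • c' β) hc'
    funext β
    rw [← this, smul_smul, inv_mul_cancel₀ (hA' _), one_smul]

end Fin5

end BH

/-- Let `f` be strongly tame for the weights `α` and of weighted degree
`d`.  Let `J` be the ℂ-span of the polynomials `(∂f/∂xᵢ)(∂h/∂xⱼ) - (∂f/∂xⱼ)(∂h/∂xᵢ)` and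
`J_f = ⟨∂f/∂x₁,…,∂f/∂x_{n+1}⟩` the Jacobian ideal.  Then `J ⊆ J_f`, both are stable under
multiplication by `f`, and the classes of `e_β = x^β·Σᵢ (αᵢ/d)·xᵢ·∂f/∂xᵢ`, `β ∈ I`, form
a basis of `J_f/J` as a free `ℂ[t]`-module, `t` acting as multiplication by `f`: every
class in `J_f/J` has a unique representation `Σ_{β∈I} c_β(f)·e_β` with `c_β ∈ ℂ[t]`.
(This says the forms `η_β` freely generate the Brieskorn module
`H' = (df ∧ Ω^n)/(df ∧ dΩ^{n-1})` over `ℂ[t]`.) -/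
theorem brieskorn_Hp_free
    (n : ℕ) (hn : 1 ≤ n) (α : Fin (n + 1) → ℕ)
    (hαpos : ∀ i, 0 < α i) (hα : Finset.univ.gcd α = 1)
    (f : MvPolynomial (Fin (n + 1)) ℂ) (d : ℕ)
    (hd : MvPolynomial.weightedTotalDegree α f = d)
    (g : MvPolynomial (Fin (n + 1)) ℂ)
    (hg : g = weightedHomogeneousComponent α d f)
    (hg0 : g ≠ 0)
    (htame : ∀ x : Fin (n + 1) → ℂ, (∀ i, eval x (pderiv i g) = 0) → x = 0)
    (I : Finset (Fin (n + 1) →₀ ℕ))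
    (hIindep : LinearIndependent ℂ (fun β : I =>
      Ideal.Quotient.mk (Ideal.span (Set.range fun i => pderiv i g))
        (monomial (β : Fin (n + 1) →₀ ℕ) (1 : ℂ))))
    (hIspan : Submodule.span ℂ (Set.range fun β : I =>
      Ideal.Quotient.mk (Ideal.span (Set.range fun i => pderiv i g))
        (monomial (β : Fin (n + 1) →₀ ℕ) (1 : ℂ))) = ⊤)
    (J : Submodule ℂ (MvPolynomial (Fin (n + 1)) ℂ))
    (hJ : J = Submodule.span ℂ
      {P : MvPolynomial (Fin (n + 1)) ℂ |
        ∃ (h : MvPolynomial (Fin (n + 1)) ℂ) (i j : Fin (n + 1)), i < j ∧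
          P = pderiv i f * pderiv j h - pderiv j f * pderiv i h})
    (Jf : Submodule ℂ (MvPolynomial (Fin (n + 1)) ℂ))
    (hJf : Jf = Submodule.restrictScalars ℂ
      (Ideal.span (Set.range fun i => pderiv i f)))
    (e : (Fin (n + 1) →₀ ℕ) → MvPolynomial (Fin (n + 1)) ℂ)
    (he : ∀ β, e β = monomial β (1 : ℂ) *
      ∑ i, C ((α i : ℂ) / (d : ℂ)) * X i * pderiv i f) :
    J ≤ Jf ∧
    (∀ P ∈ J, f * P ∈ J) ∧
    (∀ P ∈ Jf, f * P ∈ Jf) ∧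
    ∀ v ∈ Jf.map J.mkQ,
      ∃! c : {β // β ∈ I} → Polynomial ℂ,
        v = ∑ β ∈ I.attach, J.mkQ (Polynomial.aeval f (c β) * e (β : Fin (n + 1) →₀ ℕ)) := by
  subst hJ hJf
  have hwt : ∀ β, Finsupp.weight α β = BH.wt α β := by
    intro β
    rw [Finsupp.weight_apply, Finsupp.sum_fintype _ _ (by simp), BH.wt]
    exact Finset.sum_congr rfl fun i _ => by rw [smul_eq_mul, mul_comm]
  have hf : f ∈ BH.SP α (· ≤ (d : ℤ)) := by
    intro β hβ
    have := le_weightedTotalDegree α (mem_support_iff.2 hβ)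
    rw [hd, hwt] at this
    show (BH.wt α β : ℤ) ≤ d
    exact_mod_cast this
  have hg' : g = BH.hc α d f := by
    classical
    ext β
    rw [hg, coeff_weightedHomogeneousComponent, BH.coeff_hc, hwt]
    simp only [Nat.cast_inj]
  have hd0 : 0 < d := by
    rcases Nat.eq_zero_or_pos d with h0 | h0
    · exfalso
      have h1 : ∀ i, pderiv i g = 0 := by
        intro i
        apply BH.SP_neg α
        refine BH.SP_mono α (fun k hk => ?_) (BH.pd_g α f g d hg' i)
        have hk' : k = (d : ℤ) - α i := hk
        have := hαpos i
        show k < 0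
        omega
      have h2 := htame (fun _ => 1) (fun i => by rw [h1, map_zero])
      exact one_ne_zero (congrFun h2 0)
    · exact h0
  refine ⟨BH.JJ_le f, fun P hP => BH.JJ_stable f P hP,
    fun P hP => Ideal.mul_mem_left _ _ hP, fun v hv => ?_⟩
  have key := BH.final α f g d I hαpos (by omega) hf hg' hd0 hIindep hIspan v hv
  have he' : ∀ β, e β = monomial β 1 * ((d : ℂ)⁻¹ • BH.Eu α f) := by
    intro β
    rw [he, BH.Eu, Finset.smul_sum]
    congr 1
    refine Finset.sum_congr rfl fun i _ => ?_
    rw [smul_eq_C_mul, div_eq_inv_mul, C_mul]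
    ring
  simp only [he']
  exact key
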